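/- Every finite abelian subgroup of PGL₂(K), K algebraically closed of characteristic p ≥ 0, whose order is coprime to p (with no condition if p = 0), is either cyclic or isomorphic to Z/2 × Z/2. -/

import Mathlib

/-!
Replace `H` by its preimage `Γ ≤ GL₂(K)`, so that `H` is `Γ` modulo scalars.

If `Γ` is commutative, take a non-scalar `a ∈ Γ`; then `Γ ⊆ K[a]`, since the centralizer of a
non-scalar `2 × 2` matrix consists of its polynomials. Some power of `a` with exponent prime to
the characteristic is scalar, so `a` has two distinct eigenvalues `l`, `m` in an algebraic closure.
The ratio of the evaluations `a ↦ l` and `a ↦ m` is a character of `Γ` whose kernel is the group of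
scalars, and a finite group of units of a field is cyclic.

Otherwise choose `a b ∈ Γ` that do not commute. Commutators in `Γ` are scalars of determinant `1`,
hence square roots of unity, so `g ↦ (⁅g, a⁆, ⁅g, b⁆)` is a homomorphism `Γ → μ₂ × μ₂`. It is onto
because `⁅a, b⁆ ≠ 1`, and its kernel is the group of scalars because a matrix commuting with both
`a` and `b` is scalar.
-/

open Matrix Module Polynomial
open scoped MatrixGroups commutatorElement

section Centralizer

variable {K : Type*} [Field K]

theorem exists_eq_algebraMap_add_smul_of_commute_of_finrank_eq_two {V : Type*} [AddCommGroup V]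
    [Module K V] (hV : finrank K V = 2) {f g : End K V}
    (hf : f ∉ (algebraMap K (End K V)).range) (hfg : Commute f g) :
    ∃ x y : K, g = algebraMap K (End K V) x + y • f := by
  obtain ⟨v, hv⟩ : ∃ v, LinearIndependent K ![v, f v] := by
    contrapose! hf
    obtain ⟨c, hc⟩ := f.exists_eq_smul_id_of_forall_notLinearIndependent hf
    exact ⟨c, by rw [hc, Algebra.algebraMap_eq_smul_one]⟩
  let b : Basis (Fin 2) K V := basisOfLinearIndependentOfCardEqFinrank hv (by simp [hV])
  have hb : ⇑b = ![v, f v] := coe_basisOfLinearIndependentOfCardEqFinrank hv _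
  have hgv : g v = b.repr (g v) 0 • v + b.repr (g v) 1 • f v := by
    simpa [hb, Fin.sum_univ_two] using (b.sum_repr (g v)).symm
  set x := b.repr (g v) 0
  set y := b.repr (g v) 1
  have hgfv : g (f v) = x • f v + y • f (f v) := by
    rw [← End.mul_apply, ← hfg.eq, End.mul_apply, hgv, map_add, map_smul, map_smul]
  refine ⟨x, y, b.ext fun i ↦ ?_⟩
  fin_cases i
  · simpa [hb] using hgv
  · simpa [hb] using hgfv

theorem exists_eq_algebraMap_add_smul_of_commute {A B : Matrix (Fin 2) (Fin 2) K}
    (hA : A ∉ (algebraMap K (Matrix (Fin 2) (Fin 2) K)).range) (hAB : Commute A B) :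
    ∃ x y : K, B = algebraMap K (Matrix (Fin 2) (Fin 2) K) x + y • A := by
  let e : Matrix (Fin 2) (Fin 2) K ≃ₐ[K] End K (Fin 2 → K) := toLinAlgEquiv'
  have heA : e A ∉ (algebraMap K (End K (Fin 2 → K))).range := by
    rintro ⟨c, hc⟩
    exact hA ⟨c, e.injective (by rw [e.commutes, hc])⟩
  obtain ⟨x, y, hxy⟩ := exists_eq_algebraMap_add_smul_of_commute_of_finrank_eq_two
    (by simp) heA (hAB.map e)
  exact ⟨x, y, e.injective (by rw [hxy, map_add, e.commutes, map_smul])⟩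

theorem mem_range_algebraMap_of_commute_of_not_commute {A B X : Matrix (Fin 2) (Fin 2) K}
    (hAB : ¬ Commute A B) (hA : Commute X A) (hB : Commute X B) :
    X ∈ (algebraMap K (Matrix (Fin 2) (Fin 2) K)).range := by
  by_contra hX
  obtain ⟨x, y, rfl⟩ := exists_eq_algebraMap_add_smul_of_commute hX hA
  exact hAB ((Algebra.commute_algebraMap_left x B).add_left (hB.smul_left y))

end Centralizer

section Eigenvalues

variable {K S : Type*} [Field K] [Ring S] [Algebra K S]

theorem separable_minpoly_of_pow_eq_algebraMap {a : S} {n : ℕ} {c : K}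
    (hn : (n : K) ≠ 0) (hc : c ≠ 0) (ha : a ^ n = algebraMap K S c) :
    (minpoly K a).Separable :=
  (separable_X_pow_sub_C c hn hc).of_dvd (minpoly.dvd K a (by simp [ha]))

theorem exists_ne_aeval_eq_zero_of_separable (L : Type*) [Field L] [IsAlgClosed L] [Algebra K L]
    {p : K[X]} (hp : p.Separable) (hdeg : 2 ≤ p.natDegree) :
    ∃ l m : L, l ≠ m ∧ aeval l p = 0 ∧ aeval m p = 0 := by
  have hcard : 1 < Fintype.card (p.rootSet L) := by
    rw [card_rootSet_eq_natDegree hp (IsAlgClosed.splits _)]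
    exact hdeg
  obtain ⟨l, m, hlm⟩ := Fintype.exists_pair_of_one_lt_card hcard
  exact ⟨l, m, Subtype.coe_ne_coe.mpr hlm, aeval_eq_zero_of_mem_rootSet l.2,
    aeval_eq_zero_of_mem_rootSet m.2⟩

theorem exists_monoidHom_eq_aeval_root {M T : Type*} [Monoid M] [CommRing T] [Algebra K T]
    {a : S} {l : T} (hl : aeval l (minpoly K a) = 0) (f : M →* S)
    (hf : ∀ g, f g ∈ Algebra.adjoin K {a}) :
    ∃ φ : M →* T, ∀ g (p : K[X]), f g = aeval a p → φ g = aeval l p := by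
  have aeval_congr {p q : K[X]} (h : aeval a p = aeval a q) : aeval l p = aeval l q := by
    rw [← sub_eq_zero, ← map_sub]
    exact aeval_eq_zero_of_dvd_aeval_eq_zero (minpoly.dvd K a (by simp [h])) hl
  simp only [Algebra.adjoin_singleton_eq_range_aeval, AlgHom.mem_range] at hf
  choose p hp using hf
  refine ⟨⟨⟨fun g ↦ aeval l (p g), ?_⟩, fun g h ↦ ?_⟩, fun g q hq ↦ aeval_congr ?_⟩
  · simpa using aeval_congr (p := p 1) (q := 1) (by simp [hp])
  · simpa using aeval_congr (p := p (g * h)) (q := p g * p h) (by simp [hp])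
  · rw [hp, hq]

theorem exists_monoidHom_units_eq_one_iff_mem_range_algebraMap {G T : Type*} [Group G]
    [CommRing T] [IsDomain T] [Algebra K T] {a : S} {l m : T} (hlm : l ≠ m)
    (hl : aeval l (minpoly K a) = 0) (hm : aeval m (minpoly K a) = 0) (f : G →* S)
    (hf : ∀ g, ∃ x y : K, f g = algebraMap K S x + y • a) :
    ∃ χ : G →* Tˣ, ∀ g, χ g = 1 ↔ f g ∈ (algebraMap K S).range := by
  have hadjoin (g : G) : f g ∈ Algebra.adjoin K {a} := by
    obtain ⟨x, y, hxy⟩ := hf g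
    rw [hxy]
    exact add_mem (algebraMap_mem _ x)
      (Subalgebra.smul_mem _ (Algebra.self_mem_adjoin_singleton K a) y)
  obtain ⟨φ, hφ⟩ := exists_monoidHom_eq_aeval_root hl f hadjoin
  obtain ⟨ψ, hψ⟩ := exists_monoidHom_eq_aeval_root hm f hadjoin
  refine ⟨φ.toHomUnits / ψ.toHomUnits, fun g ↦ ?_⟩
  rw [MonoidHom.div_apply, div_eq_one, Units.ext_iff, MonoidHom.coe_toHomUnits,
    MonoidHom.coe_toHomUnits]
  constructor
  · intro h
    obtain ⟨x, y, hxy⟩ := hf g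
    have hp : f g = aeval a (C x + C y * X) := by simp [hxy, Algebra.smul_def]
    have hy : y = 0 := by simpa [hφ g _ hp, hψ g _ hp, hlm] using h
    exact ⟨x, by simp [hxy, hy]⟩
  · rintro ⟨c, hc⟩
    have hp : f g = aeval a (C c) := by simp [hc]
    rw [hφ g _ hp, hψ g _ hp, aeval_C, aeval_C]

end Eigenvalues

section CyclicCase

theorem mem_center_iff_val_mem_range_algebraMap {n R : Type*} [Fintype n] [DecidableEq n]
    [CommRing R] {g : GL n R} :
    g ∈ Subgroup.center (GL n R) ↔ (g : Matrix n n R) ∈ (algebraMap R (Matrix n n R)).range :=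
  GeneralLinearGroup.mem_center_iff_val_mem_range_scalar

theorem isCyclic_quotient_of_eq_ker {G T : Type*} [Group G] [CommRing T] [IsDomain T]
    {N : Subgroup G} [N.Normal] [Finite (G ⧸ N)] {χ : G →* Tˣ} (hN : N = χ.ker) :
    IsCyclic (G ⧸ N) := by
  subst hN
  exact isCyclic_of_injective_ringHom ((Units.coeHom T).comp (QuotientGroup.kerLift χ))
    (Units.val_injective.comp (QuotientGroup.kerLift_injective χ))

variable {K : Type*} [Field K] {Γ : Subgroup (GL (Fin 2) K)}

theorem separable_minpoly_of_pow_mem_center {n : Type*} [Fintype n] [DecidableEq n] [Nonempty n]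
    {g : GL n K} {k : ℕ} (hk : (k : K) ≠ 0) (hg : g ^ k ∈ Subgroup.center (GL n K)) :
    (minpoly K (g : Matrix n n K)).Separable := by
  obtain ⟨c, hc⟩ := mem_center_iff_val_mem_range_algebraMap.mp hg
  refine separable_minpoly_of_pow_eq_algebraMap hk ?_
    ((Units.val_pow_eq_pow_val g k).symm.trans hc.symm)
  rintro rfl
  exact (g ^ k).ne_zero (hc.symm.trans (map_zero _))

theorem isCyclic_quotient_center_of_isMulCommutative [IsMulCommutative Γ]
    [Finite (Γ ⧸ (Subgroup.center (GL (Fin 2) K)).subgroupOf Γ)]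
    (hcard : (Nat.card (Γ ⧸ (Subgroup.center (GL (Fin 2) K)).subgroupOf Γ) : K) ≠ 0) :
    IsCyclic (Γ ⧸ (Subgroup.center (GL (Fin 2) K)).subgroupOf Γ) := by
  set Z := (Subgroup.center (GL (Fin 2) K)).subgroupOf Γ
  by_cases htriv : Z = ⊤
  · have : Subsingleton (Γ ⧸ Z) := QuotientGroup.subsingleton_iff.mpr htriv
    infer_instance
  obtain ⟨a, ha⟩ : ∃ a, a ∉ Z := by simpa [Subgroup.eq_top_iff'] using htriv
  let f : Γ →* Matrix (Fin 2) (Fin 2) K := (Units.coeHom _).comp Γ.subtype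
  have mem_Z {g : Γ} : g ∈ Z ↔ f g ∈ (algebraMap K (Matrix (Fin 2) (Fin 2) K)).range :=
    mem_center_iff_val_mem_range_algebraMap
  have hpow : a ^ Nat.card (Γ ⧸ Z) ∈ Z := by
    rw [← QuotientGroup.eq_one_iff, QuotientGroup.mk_pow, pow_card_eq_one']
  obtain ⟨l, m, hlm, hl, hm⟩ := exists_ne_aeval_eq_zero_of_separable (AlgebraicClosure K)
    (separable_minpoly_of_pow_mem_center hcard hpow)
    ((minpoly.two_le_natDegree_iff (Algebra.IsIntegral.isIntegral _)).mpr (mem_Z.not.mp ha))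
  obtain ⟨χ, hχ⟩ := exists_monoidHom_units_eq_one_iff_mem_range_algebraMap hlm hl hm f fun g ↦
    exists_eq_algebraMap_add_smul_of_commute (mem_Z.not.mp ha)
      (Commute.map (mul_comm' a g) f)
  exact isCyclic_quotient_of_eq_ker (Subgroup.ext fun g ↦ mem_Z.trans (hχ g).symm)

end CyclicCase

section KleinCase

variable {n R : Type*} [Fintype n] [DecidableEq n] [CommRing R]

theorem exists_rootsOfUnity_commutatorElement_eq_scalar {g h : GL n R}
    (hgh : ⁅g, h⁆ ∈ Subgroup.center (GL n R)) :
    ∃ ζ : rootsOfUnity (Fintype.card n) R, ⁅g, h⁆ = GeneralLinearGroup.scalar n (ζ : Rˣ) := by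
  rw [GeneralLinearGroup.center_eq_range_scalar] at hgh
  obtain ⟨ζ, hζ⟩ := hgh
  have hdet : GeneralLinearGroup.det ⁅g, h⁆ = 1 := by
    rw [map_commutatorElement, commutatorElement_eq_one_iff_mul_comm, mul_comm]
  exact ⟨⟨ζ, by rw [mem_rootsOfUnity, ← GeneralLinearGroup.det_scalar, hζ, hdet]⟩, hζ.symm⟩

theorem generalLinearGroup_scalar_injective [Nonempty n] :
    Function.Injective (GeneralLinearGroup.scalar n : Rˣ →* GL n R) := fun u v h ↦ by
  simpa [Units.ext_iff] using h

theorem exists_monoidHom_rootsOfUnity_eq_one_iff_commute [Nonempty n] {Γ : Subgroup (GL n R)}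
    {a : GL n R} (hΓ : ∀ g ∈ Γ, ⁅g, a⁆ ∈ Subgroup.center (GL n R)) :
    ∃ χ : Γ →* rootsOfUnity (Fintype.card n) R, ∀ g, χ g = 1 ↔ Commute (g : GL n R) a := by
  choose χ hχ using fun g : Γ ↦ exists_rootsOfUnity_commutatorElement_eq_scalar (hΓ g g.2)
  have scalar_inj := generalLinearGroup_scalar_injective (n := n) (R := R)
  refine ⟨MonoidHom.mk' χ fun g h ↦ Subtype.ext (scalar_inj ?_), fun g ↦ ?_⟩
  · calc GeneralLinearGroup.scalar n (χ (g * h) : Rˣ)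
        = g * ⁅(h : GL n R), a⁆ * (g : GL n R)⁻¹ * ⁅(g : GL n R), a⁆ := by
          rw [← hχ, Subgroup.coe_mul]
          simp only [commutatorElement_def]
          group
      _ = GeneralLinearGroup.scalar n (χ h : Rˣ) * GeneralLinearGroup.scalar n (χ g : Rˣ) := by
          rw [hχ, hχ, ← GeneralLinearGroup.scalar_commute _ (g : GL n R), mul_inv_cancel_right]
      _ = GeneralLinearGroup.scalar n ((χ g * χ h : rootsOfUnity (Fintype.card n) R) : Rˣ) := by
          rw [← map_mul, Subgroup.coe_mul, mul_comm]
  · change χ g = 1 ↔ _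
    rw [commute_iff_eq, ← commutatorElement_eq_one_iff_mul_comm, hχ, map_eq_one_iff _ scalar_inj,
      OneMemClass.coe_eq_one]

theorem prod_surjective_of_zpowers_eq_top {G A B : Type*} [Group G] [Group A] [Group B]
    {φ : G →* A} {ψ : G →* B} {a b : G} (hφa : Subgroup.zpowers (φ a) = ⊤) (hψa : ψ a = 1)
    (hφb : φ b = 1) (hψb : Subgroup.zpowers (ψ b) = ⊤) : Function.Surjective (φ.prod ψ) := by
  rintro ⟨x, y⟩
  obtain ⟨i, hi⟩ := Subgroup.mem_zpowers_iff.mp (hφa ▸ Subgroup.mem_top x)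
  obtain ⟨j, hj⟩ := Subgroup.mem_zpowers_iff.mp (hψb ▸ Subgroup.mem_top y)
  exact ⟨a ^ i * b ^ j, by simp [hi, hj, hψa, hφb]⟩

theorem card_rootsOfUnity_two_of_ne_one [IsDomain R] {ζ : rootsOfUnity 2 R} (hζ : ζ ≠ 1) :
    Nat.card (rootsOfUnity 2 R) = 2 :=
  have : Nontrivial (rootsOfUnity 2 R) := ⟨ζ, 1, hζ⟩
  (card_rootsOfUnity R 2).antisymm Finite.one_lt_card

variable {K : Type*} [Field K] {Γ : Subgroup (GL (Fin 2) K)}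

theorem mem_center_iff_commute_of_not_commute {a b g : GL (Fin 2) K} (hab : ¬ Commute a b) :
    g ∈ Subgroup.center (GL (Fin 2) K) ↔ Commute g a ∧ Commute g b := by
  refine ⟨fun hg ↦ ⟨(Subgroup.mem_center_iff.mp hg a).symm,
    (Subgroup.mem_center_iff.mp hg b).symm⟩, fun ⟨ha, hb⟩ ↦ ?_⟩
  rw [mem_center_iff_val_mem_range_algebraMap]
  rw [← Commute.units_val_iff] at ha hb hab
  exact mem_range_algebraMap_of_commute_of_not_commute hab ha hb

theorem nonempty_quotient_center_mulEquiv_of_not_commute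
    (hΓ : ∀ g ∈ Γ, ∀ h ∈ Γ, ⁅g, h⁆ ∈ Subgroup.center (GL (Fin 2) K)) {a b : Γ}
    (hab : ¬ Commute (a : GL (Fin 2) K) b) :
    Nonempty (Γ ⧸ (Subgroup.center (GL (Fin 2) K)).subgroupOf Γ ≃*
      Multiplicative (ZMod 2) × Multiplicative (ZMod 2)) := by
  obtain ⟨χ, hχ⟩ : ∃ χ : Γ →* rootsOfUnity 2 K, ∀ g, χ g = 1 ↔ Commute (g : GL (Fin 2) K) a :=
    exists_monoidHom_rootsOfUnity_eq_one_iff_commute fun g hg ↦ hΓ g hg a a.2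
  obtain ⟨ψ, hψ⟩ : ∃ ψ : Γ →* rootsOfUnity 2 K, ∀ g, ψ g = 1 ↔ Commute (g : GL (Fin 2) K) b :=
    exists_monoidHom_rootsOfUnity_eq_one_iff_commute fun g hg ↦ hΓ g hg b b.2
  have hχb : χ b ≠ 1 := (hχ b).not.mpr fun h ↦ hab h.symm
  have hψa : ψ a ≠ 1 := (hψ a).not.mpr hab
  have hcard : Nat.card (rootsOfUnity 2 K) = 2 := card_rootsOfUnity_two_of_ne_one hχb
  have hsurj : Function.Surjective (χ.prod ψ) :=
    prod_surjective_of_zpowers_eq_top (zpowers_eq_top_of_prime_card hcard hχb)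
      ((hψ b).mpr (.refl _)) ((hχ a).mpr (.refl _)) (zpowers_eq_top_of_prime_card hcard hψa)
  have hker : (Subgroup.center (GL (Fin 2) K)).subgroupOf Γ = (χ.prod ψ).ker := by
    ext g
    rw [Subgroup.mem_subgroupOf, mem_center_iff_commute_of_not_commute hab, MonoidHom.mem_ker,
      MonoidHom.prod_apply, Prod.mk_eq_one, hχ, hψ]
  let e : rootsOfUnity 2 K ≃* Multiplicative (ZMod 2) :=
    mulEquivOfPrimeCardEq (p := 2) hcard (by simp)
  exact ⟨(QuotientGroup.liftEquiv _ hsurj hker).trans (e.prodCongr e)⟩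

end KleinCase

theorem nonempty_comap_quotient_subgroupOf_mulEquiv {G G' : Type*} [Group G] [Group G']
    {π : G →* G'} {N : Subgroup G} [N.Normal] (hπ : Function.Surjective π) (hN : π.ker = N)
    (H : Subgroup G') : Nonempty (H.comap π ⧸ N.subgroupOf (H.comap π) ≃* H) := by
  have hker : N.subgroupOf (H.comap π) = (π.subgroupComap H).ker := by
    ext g
    rw [Subgroup.mem_subgroupOf, ← hN, MonoidHom.mem_ker, MonoidHom.mem_ker, Subtype.ext_iff]
    rfl
  exact ⟨QuotientGroup.liftEquiv _ (π.subgroupComap_surjective_of_surjective H hπ) hker⟩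

theorem natCast_ne_zero_of_ringChar_eq_zero_or_coprime {R : Type*} [NonAssocRing R]
    [Nontrivial R] {n : ℕ} (hn : n ≠ 0) (h : ringChar R = 0 ∨ n.Coprime (ringChar R)) :
    (n : R) ≠ 0 := by
  rw [Ne, ringChar.spec]
  intro hdvd
  rcases h with h | h
  · exact hn (zero_dvd_iff.mp (h ▸ hdvd))
  · exact CharP.ringChar_ne_one (Nat.eq_one_of_dvd_coprimes h hdvd dvd_rfl)

theorem stmt_13_general (K : Type*) [Field K] (H : Subgroup PGL(2, K)) [Finite H]
    (hcomm : ∀ a b : H, a * b = b * a)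
    (hord : ringChar K = 0 ∨ Nat.Coprime (Nat.card H) (ringChar K)) :
    IsCyclic H ∨
      Nonempty (H ≃* (Multiplicative (ZMod 2) × Multiplicative (ZMod 2))) := by
  let Γ := H.comap (ProjGenLinGroup.mk : GL (Fin 2) K →* PGL(2, K))
  obtain ⟨e⟩ := nonempty_comap_quotient_subgroupOf_mulEquiv ProjGenLinGroup.mk_surjective
    ProjGenLinGroup.ker_mk H
  by_cases hΓ : ∀ a b : Γ, Commute a b
  · left
    have : IsMulCommutative Γ := ⟨⟨hΓ⟩⟩
    have : Finite (Γ ⧸ (Subgroup.center (GL (Fin 2) K)).subgroupOf Γ) := .of_equiv H e.symm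
    rw [← e.isCyclic]
    apply isCyclic_quotient_center_of_isMulCommutative
    rw [Nat.card_congr e.toEquiv]
    exact natCast_ne_zero_of_ringChar_eq_zero_or_coprime Nat.card_pos.ne' hord
  · right
    push Not at hΓ
    obtain ⟨a, b, hab⟩ := hΓ
    have hcentral : ∀ g ∈ Γ, ∀ h ∈ Γ, ⁅g, h⁆ ∈ Subgroup.center (GL (Fin 2) K) := by
      intro g hg h hh
      rw [← ProjGenLinGroup.mk_eq_one, map_commutatorElement,
        commutatorElement_eq_one_iff_mul_comm]
      exact congrArg Subtype.val (hcomm ⟨_, hg⟩ ⟨_, hh⟩)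
    obtain ⟨e'⟩ := nonempty_quotient_center_mulEquiv_of_not_commute hcentral
      fun h ↦ hab (Subtype.ext h.eq)
    exact ⟨e.symm.trans e'⟩

/-- Every finite abelian subgroup of `PGL₂(K)`, for `K` algebraically closed of
characteristic `p ≥ 0`, whose order is coprime to `p` (with no condition if `p = 0`),
is either cyclic or isomorphic to `Z/2 × Z/2`. Here `PGL₂(K)` is realized as the
quotient of `GL₂(K) = (M₂(K))ˣ` by its center. -/
theorem stmt_13 (K : Type*) [Field K] [IsAlgClosed K]
    (H : Subgroup ((Matrix (Fin 2) (Fin 2) K)ˣ ⧸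
        Subgroup.center ((Matrix (Fin 2) (Fin 2) K)ˣ)))
    [Finite H] (hcomm : ∀ a b : H, a * b = b * a)
    (hord : ringChar K = 0 ∨ Nat.Coprime (Nat.card H) (ringChar K)) :
    IsCyclic H ∨
      Nonempty (H ≃* (Multiplicative (ZMod 2) × Multiplicative (ZMod 2))) :=
  @stmt_13_general K _ H ‹Finite H› hcomm hord
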